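/- Discretized entropy Balog–Szemerédi–Gowers theorem: Let n ∈ ℕ and let (X, Y) be a bivariate real random variable with bounded range satisfying Hₙ(X) + Hₙ(Y) − Hₙ(X, Y) ≤ log K₁. Then there exists a random variable (X'', Y', X', Y'') (on some probability space) such that: (i) (X', Y') has the same distribution as (X, Y); (ii) X' and X'' are conditionally i.i.d. given D_n(Y'); (iii) Y' and Y'' are conditionally i.i.d. given D_n(X'); (iv) (X'', Y') and Y'' are conditionally independent given D_n(X'); in particular X'' and Y'' are conditionally independent given D_n(X', Y'). Moreover Hₙ(X'' | X', Y') ≥ Hₙ(X) − log K₁ and Hₙ(Y'' | X', Y') ≥ Hₙ(Y) − log K₁. In addition, there is an absolute constant A such that for all κ ≥ 2 and all weakly κ-bi-Lipschitz real-valued functions f, g with Hₙ(f(X) + g(Y)) − (Hₙ(X) + Hₙ(Y))/2 ≤ log K₂, one has Hₙ(f(X'') + g(Y'') | X', Y') − (Hₙ(X) + Hₙ(Y))/2 ≤ 4 log K₁ + 3 log K₂ + A·log κ. -/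

import Mathlib

open MeasureTheory ProbabilityTheory Real

/-- The dyadic discretization map `D_n(x) = 2^{-n} ⌊2^n x⌋`. -/
noncomputable def Dn (n : ℕ) (x : ℝ) : ℝ := (⌊(2 : ℝ) ^ n * x⌋ : ℝ) / (2 : ℝ) ^ n

/-- Shannon entropy (base 2) of the discrete random variable `f` under `P`. -/
noncomputable def entOf {Ω : Type*} [MeasurableSpace Ω] {S : Type*}
    (P : Measure Ω) (f : Ω → S) : ℝ :=
  ∑' s : S, -((P (f ⁻¹' {s})).toReal * Real.logb 2 (P (f ⁻¹' {s})).toReal)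

/-- Conditional entropy `H(f | g) = H(f, g) - H(g)` for discrete random variables. -/
noncomputable def condEntOf {Ω : Type*} [MeasurableSpace Ω] {S T : Type*}
    (P : Measure Ω) (f : Ω → S) (g : Ω → T) : ℝ :=
  entOf P (fun ω => (f ω, g ω)) - entOf P g

/-- `H_n(X)`: entropy of `D_n(X)`. -/
noncomputable def Hn {Ω : Type*} [MeasurableSpace Ω] (P : Measure Ω) (n : ℕ) (X : Ω → ℝ) : ℝ :=
  entOf P (fun ω => Dn n (X ω))

/-- `H_n(X,Y)`: entropy of `(D_n(X), D_n(Y))`. -/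
noncomputable def Hn2 {Ω : Type*} [MeasurableSpace Ω] (P : Measure Ω) (n : ℕ)
    (X Y : Ω → ℝ) : ℝ :=
  entOf P (fun ω => (Dn n (X ω), Dn n (Y ω)))

/-- `U` and `V` are conditionally i.i.d. given the (discrete) random variable `Z`. -/
def CondIIDGiven {Ω : Type*} [MeasurableSpace Ω] {S U : Type*} [MeasurableSpace S]
    (P : Measure Ω) (f f' : Ω → S) (Z : Ω → U) : Prop :=
  ∀ u : U, P (Z ⁻¹' {u}) ≠ 0 →
    ProbabilityTheory.IndepFun f f' (ProbabilityTheory.cond P (Z ⁻¹' {u})) ∧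
      Measure.map f (ProbabilityTheory.cond P (Z ⁻¹' {u})) =
        Measure.map f' (ProbabilityTheory.cond P (Z ⁻¹' {u}))

/-- `f` and `g` are conditionally independent given the (discrete) random variable `Z`. -/
def CondIndepGiven {Ω : Type*} [MeasurableSpace Ω] {S T U : Type*}
    [MeasurableSpace S] [MeasurableSpace T]
    (P : Measure Ω) (f : Ω → S) (g : Ω → T) (Z : Ω → U) : Prop :=
  ∀ u : U, P (Z ⁻¹' {u}) ≠ 0 →
    ProbabilityTheory.IndepFun f g (ProbabilityTheory.cond P (Z ⁻¹' {u}))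

/-- `f` is weakly κ-bi-Lipschitz on `D` with at most `L` pieces: `f` is κ-Lipschitz on `D`,
and `D` decomposes into at most `L` pieces on each of which `f` has a κ-Lipschitz inverse. -/
def WeaklyBiLipschitzOn (f : ℝ → ℝ) (D : Set ℝ) (κ : ℝ) (L : ℕ) : Prop :=
  (∀ x ∈ D, ∀ y ∈ D, |f x - f y| ≤ κ * |x - y|) ∧
    ∃ R : Fin L → Set ℝ, D ⊆ (⋃ i, R i) ∧
      ∀ i : Fin L, ∀ x ∈ D ∩ R i, ∀ y ∈ D ∩ R i, |x - y| ≤ κ * |f x - f y|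

/-!
Call two points of `Ω` adjacent when they share the label `D_n(X)` or the label `D_n(Y)`, and draw a
random path `θ₂ - θ₁ - θ₃`: the points `θ₁, θ₂` share `D_n(Y)`, the points `θ₁, θ₃` share `D_n(X)`,
and the choices are otherwise independent. Each step costs a known amount of entropy, so the labels
of the path have entropy exactly `3 Hₙ(X, Y) - Hₙ(X) - Hₙ(Y)`.

Write `uᵢ = f(X(θᵢ))` and `vᵢ = g(Y(θᵢ))`. Up to an error of order `κ 2⁻ⁿ` we have `u₁ ≈ u₃` and
`v₁ ≈ v₂`, hence `u₂ + v₃ ≈ (u₂ + v₂) - (u₁ + v₁) + (u₃ + v₃)`. So the discretized sum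
`t = D_n(u₂ + v₃)` is, up to `O(log κ)` bits, a function of the three sums along the path, and also
a function of the end labels `D_n(X(θ₂))`, `D_n(Y(θ₃))`. The three sums together with the end labels
determine all labels of the path up to `O(log κ)` bits, because `f` and `g` can be inverted.
Submodularity of entropy therefore bounds `H(t)` plus the entropy of the path by the entropy of the
three sums plus that of the end labels.
-/

/-- A finite-valued random variable: its range is finite and its fibres are measurable. Since the
value type carries no σ-algebra, tuples and arbitrary functions of such variables are again
finite-valued without measurability side conditions. -/
structure FiniteValued {Ω S : Type*} [MeasurableSpace Ω] (f : Ω → S) : Prop where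
  measurableSet_fiber : ∀ s, MeasurableSet (f ⁻¹' {s})
  finite_range : (Set.range f).Finite

lemma preimage_prodMk_singleton {Ω S T : Type*} (f : Ω → S) (g : Ω → T) (s : S) (t : T) :
    (fun ω => (f ω, g ω)) ⁻¹' {(s, t)} = f ⁻¹' {s} ∩ g ⁻¹' {t} := by
  rw [← Set.singleton_prod_singleton, Set.mk_preimage_prod]

section Entropy

variable {Ω S T U V : Type*} [MeasurableSpace Ω] {P : Measure Ω}
  {f : Ω → S} {g : Ω → T} {h : Ω → U} {k : Ω → V}

namespace FiniteValued

lemma measurableSet_preimage (hf : FiniteValued f) (B : Set S) : MeasurableSet (f ⁻¹' B) := by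
  rw [← Set.preimage_inter_range, ← Set.biUnion_preimage_singleton]
  exact (hf.finite_range.inter_of_right B).measurableSet_biUnion fun s _ => hf.measurableSet_fiber s

lemma measurable [MeasurableSpace S] (hf : FiniteValued f) : Measurable f :=
  fun B _ => hf.measurableSet_preimage B

lemma comp (hf : FiniteValued f) (φ : S → T) : FiniteValued fun ω => φ (f ω) where
  measurableSet_fiber t := hf.measurableSet_preimage (φ ⁻¹' {t})
  finite_range := by
    rw [show (fun ω => φ (f ω)) = φ ∘ f from rfl, Set.range_comp]
    exact hf.finite_range.image φ

lemma prodMk (hf : FiniteValued f) (hg : FiniteValued g) :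
    FiniteValued fun ω => (f ω, g ω) where
  measurableSet_fiber s := by
    rw [preimage_prodMk_singleton]
    exact (hf.measurableSet_fiber s.1).inter (hg.measurableSet_fiber s.2)
  finite_range := (hf.finite_range.prod hg.finite_range).subset <| by
    rintro _ ⟨ω, rfl⟩
    exact ⟨⟨ω, rfl⟩, ω, rfl⟩

lemma exists_finset (hf : FiniteValued f) : ∃ A : Finset S, ∀ ω, f ω ∈ A :=
  ⟨hf.finite_range.toFinset, fun ω => by simp⟩

lemma comp_measurable {Ω' : Type*} [MeasurableSpace Ω'] {θ : Ω' → Ω} (hf : FiniteValued f)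
    (hθ : Measurable θ) : FiniteValued fun ω => f (θ ω) where
  measurableSet_fiber s := hθ (hf.measurableSet_fiber s)
  finite_range := hf.finite_range.subset (Set.range_comp_subset_range θ f)

lemma sum_measure_inter (hf : FiniteValued f) {A : Finset S} (hA : ∀ᵐ ω ∂P, f ω ∈ A)
    (t : Set Ω) : ∑ s ∈ A, P (t ∩ f ⁻¹' {s}) = P t := by
  calc ∑ s ∈ A, P (t ∩ f ⁻¹' {s})
      = ∑ s ∈ A, (P.restrict t) (f ⁻¹' {s}) := by
        simp only [Measure.restrict_apply (hf.measurableSet_fiber _), Set.inter_comm]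
    _ = (P.restrict t) (f ⁻¹' A) :=
        sum_measure_preimage_singleton A fun s _ => hf.measurableSet_fiber s
    _ = P (f ⁻¹' A ∩ t) := Measure.restrict_apply (hf.measurableSet_preimage _)
    _ = P t := by
        refine measure_congr ?_
        filter_upwards [hA] with ω hω
        exact propext (and_iff_right hω)

lemma sum_measureReal_inter [IsFiniteMeasure P] (hf : FiniteValued f) {A : Finset S}
    (hA : ∀ᵐ ω ∂P, f ω ∈ A) (t : Set Ω) : ∑ s ∈ A, P.real (t ∩ f ⁻¹' {s}) = P.real t := by
  simp only [measureReal_def, ← ENNReal.toReal_sum fun _ _ => measure_ne_top P _,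
    hf.sum_measure_inter hA]

lemma sum_measureReal [IsProbabilityMeasure P] (hf : FiniteValued f) {A : Finset S}
    (hA : ∀ᵐ ω ∂P, f ω ∈ A) : ∑ s ∈ A, P.real (f ⁻¹' {s}) = 1 := by
  simpa using hf.sum_measureReal_inter hA Set.univ

lemma sum_smul_cond_fiber [IsFiniteMeasure P] (hf : FiniteValued f) :
    Measure.sum (fun s => P (f ⁻¹' {s}) • P[|f ⁻¹' {s}]) = P := by
  obtain ⟨A, hA⟩ := hf.exists_finset
  have hempty (s : S) (hs : s ∉ A) : f ⁻¹' {s} = ∅ :=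
    Set.eq_empty_of_forall_notMem fun ω hω => hs (Set.mem_singleton_iff.1 hω ▸ hA ω)
  ext t ht
  rw [Measure.sum_apply _ ht, tsum_eq_sum (s := A) fun s hs => by simp [hempty s hs],
    ← hf.sum_measure_inter (.of_forall hA) t]
  refine Finset.sum_congr rfl fun s _ => ?_
  rw [Measure.smul_apply, smul_eq_mul, mul_comm, cond_mul_eq_inter (hf.measurableSet_fiber s),
    Set.inter_comm]

end FiniteValued

lemma entOf_eq_sum {A : Finset S} (hA : ∀ᵐ ω ∂P, f ω ∈ A) :
    entOf P f = (∑ s ∈ A, negMulLog (P.real (f ⁻¹' {s}))) / log 2 := by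
  have hterm (s : S) : -((P (f ⁻¹' {s})).toReal * logb 2 (P (f ⁻¹' {s})).toReal) =
      negMulLog (P.real (f ⁻¹' {s})) / log 2 := by
    simp only [negMulLog, logb, Measure.real]
    ring
  have hnull (s : S) (hs : s ∉ A) : P (f ⁻¹' {s}) = 0 :=
    measure_mono_null (fun ω hω => by simpa [Set.mem_singleton_iff.1 hω] using hs) hA
  rw [entOf, tsum_eq_sum (s := A) fun s hs => by simp [hnull s hs], Finset.sum_div]
  exact Finset.sum_congr rfl fun s _ => hterm s

lemma entOf_comp_of_injective {φ : S → T} (hφ : φ.Injective) (P : Measure Ω) (f : Ω → S) :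
    entOf P (fun ω => φ (f ω)) = entOf P f := by
  have hfiber (s : S) : (fun ω => φ (f ω)) ⁻¹' {φ s} = f ⁻¹' {s} := by
    ext ω
    simp [hφ.eq_iff]
  rw [entOf, ← hφ.tsum_eq]
  · simp only [hfiber, entOf]
  · intro t ht
    by_contra hrange
    have : (fun ω => φ (f ω)) ⁻¹' {t} = ∅ :=
      Set.eq_empty_of_forall_notMem fun ω hω => hrange ⟨f ω, hω⟩
    simp [this] at ht

lemma entOf_congr {f' : Ω → S} (hff' : f =ᵐ[P] f') : entOf P f = entOf P f' := by
  have hfiber (s : S) : P (f ⁻¹' {s}) = P (f' ⁻¹' {s}) :=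
    measure_congr (hff'.preimage {s})
  simp only [entOf, hfiber]

lemma entOf_eq_of_measure_fiber_eq {Ω' : Type*} [MeasurableSpace Ω'] {Q : Measure Ω'} {f' : Ω' → S}
    (hfiber : ∀ s, P (f ⁻¹' {s}) = Q (f' ⁻¹' {s})) : entOf P f = entOf Q f' := by
  simp only [entOf, hfiber]

lemma entOf_comp_measurePreserving {Ω' : Type*} [MeasurableSpace Ω'] {Q : Measure Ω'}
    {θ : Ω' → Ω} (hθ : MeasurePreserving θ Q P) (hf : FiniteValued f) :
    entOf Q (fun ω => f (θ ω)) = entOf P f :=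
  entOf_eq_of_measure_fiber_eq fun s =>
    hθ.measure_preimage (hf.measurableSet_fiber s).nullMeasurableSet

lemma entOf_nonneg [IsZeroOrProbabilityMeasure P] (f : Ω → S) : 0 ≤ entOf P f :=
  tsum_nonneg fun _ => neg_nonneg.2 <| mul_nonpos_of_nonneg_of_nonpos ENNReal.toReal_nonneg <|
    logb_nonpos one_lt_two ENNReal.toReal_nonneg measureReal_le_one

lemma entOf_le_logb [IsProbabilityMeasure P] (hf : FiniteValued f) {A : Finset S}
    (hA : ∀ᵐ ω ∂P, f ω ∈ A) {M : ℝ} (hM : (A.card : ℝ) ≤ M) : entOf P f ≤ logb 2 M := by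
  have hsum := hf.sum_measureReal hA
  have hcard : 0 < (A.card : ℝ) := by
    rw [Nat.cast_pos, Finset.card_pos]
    exact Finset.nonempty_of_sum_ne_zero (hsum ▸ one_ne_zero)
  have hjensen : (A.card : ℝ)⁻¹ * ∑ s ∈ A, negMulLog (P.real (f ⁻¹' {s})) ≤
      (A.card : ℝ)⁻¹ * log A.card := by
    simpa [← Finset.mul_sum, hsum, negMulLog] using
      concaveOn_negMulLog.le_map_sum (t := A) (w := fun _ => (A.card : ℝ)⁻¹)
        (p := fun s => P.real (f ⁻¹' {s})) (fun _ _ => by positivity) (by simp [hcard.ne'])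
        fun _ _ => measureReal_nonneg
  calc entOf P f = (∑ s ∈ A, negMulLog (P.real (f ⁻¹' {s}))) / log 2 := entOf_eq_sum hA
    _ ≤ logb 2 A.card := by
        rw [logb]
        gcongr
        exact le_of_mul_le_mul_left hjensen (inv_pos.2 hcard)
    _ ≤ logb 2 M := logb_le_logb_of_le one_lt_two hcard hM

lemma measureReal_mul_cond_real [IsFiniteMeasure P] {s : Set Ω} (hs : MeasurableSet s)
    (t : Set Ω) : P.real s * P[|s].real t = P.real (t ∩ s) := by
  rw [Set.inter_comm, measureReal_def, measureReal_def, measureReal_def, mul_comm,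
    ← ENNReal.toReal_mul, cond_mul_eq_inter hs]

theorem condEntOf_eq_sum [IsFiniteMeasure P] (hf : FiniteValued f) (hg : FiniteValued g)
    {B : Finset T} (hB : ∀ᵐ ω ∂P, g ω ∈ B) :
    condEntOf P f g = ∑ t ∈ B, P.real (g ⁻¹' {t}) * entOf P[|g ⁻¹' {t}] f := by
  obtain ⟨A, hA⟩ := hf.exists_finset
  have hcol (t : T) : ∑ s ∈ A, negMulLog (P.real (f ⁻¹' {s} ∩ g ⁻¹' {t})) =
      negMulLog (P.real (g ⁻¹' {t})) +
        P.real (g ⁻¹' {t}) * ∑ s ∈ A, negMulLog (P[|g ⁻¹' {t}].real (f ⁻¹' {s})) := by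
    rcases eq_or_ne (P (g ⁻¹' {t})) 0 with h0 | h0
    · have hinter (s : S) : P (f ⁻¹' {s} ∩ g ⁻¹' {t}) = 0 :=
        measure_mono_null Set.inter_subset_right h0
      simp [Measure.real, h0, hinter]
    have := cond_isProbabilityMeasure h0
    simp only [← measureReal_mul_cond_real (hg.measurableSet_fiber t), negMulLog_mul,
      Finset.sum_add_distrib, ← Finset.sum_mul, ← Finset.mul_sum,
      hf.sum_measureReal (.of_forall hA), one_mul]
  have hAB : ∀ᵐ ω ∂P, (f ω, g ω) ∈ A ×ˢ B := by
    filter_upwards [hB] with ω hω using Finset.mk_mem_product (hA ω) hω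
  rw [condEntOf, entOf_eq_sum hAB, entOf_eq_sum hB, Finset.sum_product_right]
  simp only [preimage_prodMk_singleton, hcol, Finset.sum_add_distrib, add_div,
    add_sub_cancel_left, Finset.sum_div, mul_div_assoc,
    entOf_eq_sum (Filter.Eventually.of_forall hA)]

lemma condEntOf_comp_of_injective {φ : T → U} (hφ : φ.Injective) (P : Measure Ω) (f : Ω → S)
    (g : Ω → T) : condEntOf P f (fun ω => φ (g ω)) = condEntOf P f g :=
  congrArg₂ (· - ·)
    (entOf_comp_of_injective (Function.injective_id.prodMap hφ) P fun ω => (f ω, g ω))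
    (entOf_comp_of_injective hφ P g)

lemma condEntOf_nonneg [IsFiniteMeasure P] (hf : FiniteValued f) (hg : FiniteValued g) :
    0 ≤ condEntOf P f g := by
  obtain ⟨B, hB⟩ := hg.exists_finset
  rw [condEntOf_eq_sum hf hg (.of_forall hB)]
  exact Finset.sum_nonneg fun t _ => mul_nonneg measureReal_nonneg (entOf_nonneg f)

lemma entOf_comp_le [IsFiniteMeasure P] (hf : FiniteValued f) (φ : S → T) :
    entOf P (fun ω => φ (f ω)) ≤ entOf P f := by
  have hgraph : entOf P (fun ω => (f ω, φ (f ω))) = entOf P f :=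
    entOf_comp_of_injective (φ := fun s => (s, φ s)) (fun _ _ h => congrArg Prod.fst h) P f
  have := condEntOf_nonneg (P := P) hf (hf.comp φ)
  rw [condEntOf, hgraph] at this
  linarith

lemma condEntOf_le_entOf [IsProbabilityMeasure P] (hf : FiniteValued f) (hg : FiniteValued g) :
    condEntOf P f g ≤ entOf P f := by
  obtain ⟨A, hA⟩ := hf.exists_finset
  obtain ⟨B, hB⟩ := hg.exists_finset
  have hrow (s : S) : ∑ t ∈ B, P.real (g ⁻¹' {t}) • P[|g ⁻¹' {t}].real (f ⁻¹' {s}) =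
      P.real (f ⁻¹' {s}) := by
    simp only [smul_eq_mul, measureReal_mul_cond_real (hg.measurableSet_fiber _),
      hg.sum_measureReal_inter (.of_forall hB)]
  have hjensen (s : S) :
      ∑ t ∈ B, P.real (g ⁻¹' {t}) • negMulLog (P[|g ⁻¹' {t}].real (f ⁻¹' {s})) ≤
        negMulLog (P.real (f ⁻¹' {s})) := by
    rw [← hrow]
    exact concaveOn_negMulLog.le_map_sum (fun _ _ => measureReal_nonneg)
      (hg.sum_measureReal (.of_forall hB)) fun _ _ => measureReal_nonneg
  calc condEntOf P f g
      = ∑ t ∈ B, P.real (g ⁻¹' {t}) *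
          ((∑ s ∈ A, negMulLog (P[|g ⁻¹' {t}].real (f ⁻¹' {s}))) / log 2) := by
        simp only [condEntOf_eq_sum hf hg (.of_forall hB),
          entOf_eq_sum (Filter.Eventually.of_forall hA)]
    _ = (∑ s ∈ A, ∑ t ∈ B,
          P.real (g ⁻¹' {t}) • negMulLog (P[|g ⁻¹' {t}].real (f ⁻¹' {s}))) / log 2 := by
        rw [Finset.sum_comm]
        simp only [smul_eq_mul, ← Finset.mul_sum, Finset.sum_div, mul_div_assoc]
    _ ≤ (∑ s ∈ A, negMulLog (P.real (f ⁻¹' {s}))) / log 2 := by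
        gcongr with s
        exact hjensen s
    _ = entOf P f := (entOf_eq_sum (.of_forall hA)).symm

lemma entOf_prodMk_le [IsProbabilityMeasure P] (hf : FiniteValued f) (hg : FiniteValued g) :
    entOf P (fun ω => (f ω, g ω)) ≤ entOf P f + entOf P g :=
  sub_le_iff_le_add.1 (condEntOf_le_entOf hf hg)

lemma entOf_prodMk_comm (f : Ω → S) (g : Ω → T) :
    entOf P (fun ω => (f ω, g ω)) = entOf P (fun ω => (g ω, f ω)) :=
  entOf_comp_of_injective Prod.swap_injective P fun ω => (g ω, f ω)

theorem condEntOf_prodMk_le [IsFiniteMeasure P] (hf : FiniteValued f) (hg : FiniteValued g)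
    (hh : FiniteValued h) :
    condEntOf P (fun ω => (f ω, g ω)) h ≤ condEntOf P f h + condEntOf P g h := by
  obtain ⟨C, hC⟩ := hh.exists_finset
  rw [condEntOf_eq_sum (hf.prodMk hg) hh (.of_forall hC), condEntOf_eq_sum hf hh (.of_forall hC),
    condEntOf_eq_sum hg hh (.of_forall hC), ← Finset.sum_add_distrib]
  gcongr with u
  rw [← mul_add]
  rcases eq_or_ne (P (h ⁻¹' {u})) 0 with h0 | h0
  · simp [Measure.real, h0]
  · have := cond_isProbabilityMeasure h0
    gcongr
    exact entOf_prodMk_le hf hg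

lemma condEntOf_le_condEntOf_comp [IsFiniteMeasure P] (hf : FiniteValued f)
    (hg : FiniteValued g) (φ : T → U) :
    condEntOf P f g ≤ condEntOf P f (fun ω => φ (g ω)) := by
  have hsub := condEntOf_prodMk_le (P := P) hf hg (hg.comp φ)
  have hjoint : entOf P (fun ω => ((f ω, g ω), φ (g ω))) = entOf P (fun ω => (f ω, g ω)) :=
    entOf_comp_of_injective (φ := fun p : S × T => (p, φ p.2)) (fun _ _ h => congrArg Prod.fst h) P
      (fun ω => (f ω, g ω))
  have hgraph : entOf P (fun ω => (g ω, φ (g ω))) = entOf P g :=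
    entOf_comp_of_injective (φ := fun t => (t, φ t)) (fun _ _ h => congrArg Prod.fst h) P g
  unfold condEntOf at hsub ⊢
  linarith

lemma condEntOf_le_logb [IsProbabilityMeasure P] (hf : FiniteValued f) (hg : FiniteValued g)
    {M : ℝ} (hM : ∀ t, ∃ A : Finset S, (A.card : ℝ) ≤ M ∧ ∀ᵐ ω ∂P, g ω = t → f ω ∈ A) :
    condEntOf P f g ≤ logb 2 M := by
  obtain ⟨B, hB⟩ := hg.exists_finset
  rw [condEntOf_eq_sum hf hg (.of_forall hB), ← one_mul (logb 2 M),
    ← hg.sum_measureReal (P := P) (.of_forall hB), Finset.sum_mul]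
  refine Finset.sum_le_sum fun t _ => ?_
  rcases eq_or_ne (P (g ⁻¹' {t})) 0 with h0 | h0
  · simp [Measure.real, h0]
  have := cond_isProbabilityMeasure h0
  obtain ⟨A, hAM, hA⟩ := hM t
  refine mul_le_mul_of_nonneg_left (entOf_le_logb hf ?_ hAM) measureReal_nonneg
  filter_upwards [cond_absolutelyContinuous.ae_le hA, ae_cond_mem (hg.measurableSet_fiber t)]
    with ω hω hgω using hω hgω

/-- Submodularity compares the joint entropy of `(f, g, h)` with those of `(f, g)` and `(f, h)`;
`k` is then added at the cost `H(k | g, h)`. -/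
lemma entOf_add_entOf_prodMk_le [IsProbabilityMeasure P] (hf : FiniteValued f)
    (hg : FiniteValued g) (hh : FiniteValued h) (hk : FiniteValued k) :
    entOf P f + entOf P (fun ω => (k ω, h ω)) ≤
      entOf P g + entOf P h + condEntOf P f g + condEntOf P f h +
        condEntOf P k (fun ω => (g ω, h ω)) := by
  have hsub := condEntOf_prodMk_le (P := P) hg hh hf
  have hcoarse := condEntOf_le_condEntOf_comp (P := P) hk (hf.prodMk (hg.prodMk hh)) Prod.snd
  have hmono := entOf_comp_le (P := P) (hk.prodMk (hf.prodMk (hg.prodMk hh)))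
    fun q => (q.1, q.2.2.2)
  rw [condEntOf, condEntOf, condEntOf, entOf_prodMk_comm, entOf_prodMk_comm g,
    entOf_prodMk_comm h] at hsub
  unfold condEntOf at hcoarse ⊢
  linarith

section Independence

variable [MeasurableSpace S] [MeasurableSpace T] [MeasurableSingletonClass S]
  [MeasurableSingletonClass T]

lemma entOf_prodMk_eq_add [IsProbabilityMeasure P] (hf : FiniteValued f) (hg : FiniteValued g)
    (hfg : IndepFun f g P) : entOf P (fun ω => (f ω, g ω)) = entOf P f + entOf P g := by
  obtain ⟨B, hB⟩ := hg.exists_finset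
  have hcond (t : T) : P.real (g ⁻¹' {t}) * entOf P[|g ⁻¹' {t}] f =
      P.real (g ⁻¹' {t}) * entOf P f := by
    rcases eq_or_ne (P (g ⁻¹' {t})) 0 with h0 | h0
    · simp [Measure.real, h0]
    congr 1
    refine entOf_eq_of_measure_fiber_eq fun s => ?_
    rw [cond_apply (hg.measurableSet_fiber t), Set.inter_comm,
      hfg.measure_inter_preimage_eq_mul _ _ (measurableSet_singleton s) (measurableSet_singleton t),
      mul_comm, mul_assoc, ENNReal.mul_inv_cancel h0 (measure_ne_top _ _), mul_one]
  have hchain : condEntOf P f g = entOf P f := by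
    simp only [condEntOf_eq_sum hf hg (.of_forall hB), hcond, ← Finset.sum_mul,
      hg.sum_measureReal (.of_forall hB), one_mul]
  exact sub_eq_iff_eq_add.1 hchain

lemma CondIndepGiven.condEntOf_prodMk [IsFiniteMeasure P] (hf : FiniteValued f)
    (hg : FiniteValued g) (hh : FiniteValued h) (hfg : CondIndepGiven P f g h) :
    condEntOf P (fun ω => (f ω, g ω)) h = condEntOf P f h + condEntOf P g h := by
  obtain ⟨C, hC⟩ := hh.exists_finset
  rw [condEntOf_eq_sum (hf.prodMk hg) hh (.of_forall hC), condEntOf_eq_sum hf hh (.of_forall hC),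
    condEntOf_eq_sum hg hh (.of_forall hC), ← Finset.sum_add_distrib]
  refine Finset.sum_congr rfl fun u _ => ?_
  rcases eq_or_ne (P (h ⁻¹' {u})) 0 with h0 | h0
  · simp [Measure.real, h0]
  · have := cond_isProbabilityMeasure h0
    rw [entOf_prodMk_eq_add hf hg (hfg u h0), mul_add]

lemma CondIIDGiven.condEntOf_eq [IsFiniteMeasure P] {f' : Ω → S} (hf : FiniteValued f)
    (hf' : FiniteValued f') (hh : FiniteValued h) (hff' : CondIIDGiven P f f' h) :
    condEntOf P f' h = condEntOf P f h := by
  obtain ⟨C, hC⟩ := hh.exists_finset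
  rw [condEntOf_eq_sum hf' hh (.of_forall hC), condEntOf_eq_sum hf hh (.of_forall hC)]
  refine Finset.sum_congr rfl fun u _ => ?_
  rcases eq_or_ne (P (h ⁻¹' {u})) 0 with h0 | h0
  · simp [Measure.real, h0]
  congr 1
  refine entOf_eq_of_measure_fiber_eq fun s => ?_
  rw [← Measure.map_apply hf'.measurable (measurableSet_singleton s),
    ← Measure.map_apply hf.measurable (measurableSet_singleton s), (hff' u h0).2]

lemma CondIIDGiven.condEntOf_prodMk [IsFiniteMeasure P] {f' : Ω → S} (hf : FiniteValued f)
    (hf' : FiniteValued f') (hh : FiniteValued h) (hff' : CondIIDGiven P f f' h) :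
    condEntOf P f' (fun ω => (f ω, h ω)) = condEntOf P f h := by
  have hadd := CondIndepGiven.condEntOf_prodMk hf' hf hh fun u hu => (hff' u hu).1.symm
  have hassoc : entOf P (fun ω => ((f' ω, f ω), h ω)) = entOf P (fun ω => (f' ω, f ω, h ω)) :=
    entOf_comp_of_injective (Equiv.prodAssoc S S U).symm.injective P fun ω => (f' ω, f ω, h ω)
  have hlaw := hff'.condEntOf_eq hf hf' hh
  unfold condEntOf at hadd hlaw ⊢
  linarith

end Independence

end Entropy

section Coupling

/-- The coupling of `μ` and `P` over the labels `c` and `d`: a common label is drawn, and then the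
two coordinates are drawn independently, each conditioned on carrying that label. It couples the
two measures as soon as their labels have the same law. -/
noncomputable def labelCoupling {Γ Ω S : Type*} [MeasurableSpace Γ] [MeasurableSpace Ω]
    (μ : Measure Γ) (P : Measure Ω) (c : Γ → S) (d : Ω → S) : Measure (Γ × Ω) :=
  Measure.sum fun s => P (d ⁻¹' {s}) • (μ[|c ⁻¹' {s}]).prod P[|d ⁻¹' {s}]

namespace labelCoupling

variable {Γ Ω S : Type*} [MeasurableSpace Γ] [MeasurableSpace Ω] {μ : Measure Γ} {P : Measure Ω}
  {c : Γ → S} {d : Ω → S}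

lemma ae_prod_label_eq (hc : FiniteValued c) (hd : FiniteValued d) (s : S) :
    ∀ᵐ x ∂(μ[|c ⁻¹' {s}]).prod P[|d ⁻¹' {s}], c x.1 = s ∧ d x.2 = s :=
  ((Measure.quasiMeasurePreserving_fst).ae (ae_cond_mem (hc.measurableSet_fiber s))).and
    ((Measure.quasiMeasurePreserving_snd).ae (ae_cond_mem (hd.measurableSet_fiber s)))

lemma ae_label_eq (hc : FiniteValued c) (hd : FiniteValued d) :
    ∀ᵐ x ∂labelCoupling μ P c d, c x.1 = d x.2 := by
  have hmeas : MeasurableSet {x : Γ × Ω | c x.1 = d x.2} :=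
    ((hc.comp_measurable measurable_fst).prodMk
      (hd.comp_measurable measurable_snd)).measurableSet_preimage {q | q.1 = q.2}
  refine (Measure.ae_sum_iff' hmeas).2 fun s => Measure.ae_smul_measure ?_ _
  filter_upwards [ae_prod_label_eq hc hd s] with x hx using hx.1.trans hx.2.symm

lemma restrict_fiber (hc : FiniteValued c) (hd : FiniteValued d) (s : S) :
    (labelCoupling μ P c d).restrict ((fun x => c x.1) ⁻¹' {s}) =
      P (d ⁻¹' {s}) • (μ[|c ⁻¹' {s}]).prod P[|d ⁻¹' {s}] := by
  have hfiber := (hc.comp_measurable (measurable_fst (β := Ω))).measurableSet_fiber s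
  ext E hE
  rw [labelCoupling, Measure.restrict_sum _ hfiber, Measure.sum_apply _ hE, tsum_eq_single s]
  · rw [Measure.restrict_smul, Measure.restrict_eq_self_of_ae_mem]
    filter_upwards [ae_prod_label_eq hc hd s] with x hx using hx.1
  · intro r hrs
    rw [Measure.restrict_smul, Measure.restrict_eq_zero.2, smul_zero, Measure.coe_zero,
      Pi.zero_apply]
    refine measure_eq_zero_iff_ae_notMem.2 ?_
    filter_upwards [ae_prod_label_eq hc hd r] with x hx hxs using hrs (hx.1.symm.trans hxs)

variable [IsFiniteMeasure μ] [IsFiniteMeasure P]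

lemma measurePreserving_fst (hc : FiniteValued c)
    (hcd : ∀ s, μ (c ⁻¹' {s}) = P (d ⁻¹' {s})) :
    MeasurePreserving Prod.fst (labelCoupling μ P c d) μ := by
  refine ⟨measurable_fst, ?_⟩
  rw [labelCoupling, Measure.map_sum measurable_fst.aemeasurable]
  conv_rhs => rw [← hc.sum_smul_cond_fiber (P := μ)]
  congr 1 with s : 1
  rcases eq_or_ne (P (d ⁻¹' {s})) 0 with h0 | h0
  · simp [hcd, h0]
  · have := cond_isProbabilityMeasure h0
    simp [hcd]

lemma measurePreserving_snd (hd : FiniteValued d)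
    (hcd : ∀ s, μ (c ⁻¹' {s}) = P (d ⁻¹' {s})) :
    MeasurePreserving Prod.snd (labelCoupling μ P c d) P := by
  refine ⟨measurable_snd, ?_⟩
  rw [labelCoupling, Measure.map_sum measurable_snd.aemeasurable]
  conv_rhs => rw [← hd.sum_smul_cond_fiber (P := P)]
  congr 1 with s : 1
  rcases eq_or_ne (P (d ⁻¹' {s})) 0 with h0 | h0
  · simp [h0]
  · have := cond_isProbabilityMeasure (hcd s ▸ h0)
    simp

theorem condIndepGiven (hc : FiniteValued c) (hd : FiniteValued d)
    (hcd : ∀ s, μ (c ⁻¹' {s}) = P (d ⁻¹' {s})) :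
    CondIndepGiven (labelCoupling μ P c d) Prod.fst Prod.snd fun x => c x.1 := by
  intro s hs
  have hmass : labelCoupling μ P c d ((fun x => c x.1) ⁻¹' {s}) = P (d ⁻¹' {s}) := by
    rw [← hcd, ← (measurePreserving_fst hc hcd).measure_preimage
      (hc.measurableSet_fiber s).nullMeasurableSet]
    rfl
  rw [hmass] at hs
  have := cond_isProbabilityMeasure hs
  have := cond_isProbabilityMeasure ((hcd s).trans_ne hs)
  rw [ProbabilityTheory.cond, hmass, restrict_fiber hc hd, smul_smul,
    ENNReal.inv_mul_cancel hs (measure_ne_top _ _), one_smul]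
  exact indepFun_prod measurable_id measurable_id

end labelCoupling

theorem exists_measure_prod_of_label_law {Γ Ω S : Type*} [MeasurableSpace Γ] [MeasurableSpace Ω]
    {μ : Measure Γ} {P : Measure Ω} [IsFiniteMeasure μ] [IsFiniteMeasure P] {c : Γ → S} {d : Ω → S}
    (hc : FiniteValued c) (hd : FiniteValued d) (hcd : ∀ s, μ (c ⁻¹' {s}) = P (d ⁻¹' {s})) :
    ∃ Q : Measure (Γ × Ω), MeasurePreserving Prod.fst Q μ ∧ MeasurePreserving Prod.snd Q P ∧
      (∀ᵐ x ∂Q, c x.1 = d x.2) ∧ CondIndepGiven Q Prod.fst Prod.snd fun x => c x.1 :=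
  ⟨labelCoupling μ P c d, labelCoupling.measurePreserving_fst hc hcd,
    labelCoupling.measurePreserving_snd hd hcd, labelCoupling.ae_label_eq hc hd,
    labelCoupling.condIndepGiven hc hd hcd⟩

end Coupling

section ConditionalIndependence

variable {Ω Ω' S S' T T' U V : Type*} [MeasurableSpace Ω] [MeasurableSpace Ω'] {P : Measure Ω}
  {Q : Measure Ω'} [MeasurableSpace S] [MeasurableSpace S'] [MeasurableSpace T]
  [MeasurableSpace T'] {f : Ω → S} {g : Ω → T} {h : Ω → U} {θ : Ω' → Ω}

lemma CondIndepGiven.comp (hfg : CondIndepGiven P f g h) {φ : S → S'} {ψ : T → T'}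
    (hφ : Measurable φ) (hψ : Measurable ψ) :
    CondIndepGiven P (fun ω => φ (f ω)) (fun ω => ψ (g ω)) h :=
  fun u hu => (hfg u hu).comp hφ hψ

lemma CondIIDGiven.comp {f' : Ω → S} (hff' : CondIIDGiven P f f' h) {φ : S → S'}
    (hφ : Measurable φ) (hf : Measurable f) (hf' : Measurable f') :
    CondIIDGiven P (fun ω => φ (f ω)) (fun ω => φ (f' ω)) h := by
  refine fun u hu => ⟨(hff' u hu).1.comp hφ hφ, ?_⟩
  exact (Measure.map_map hφ hf).symm.trans <|
    (congrArg (Measure.map φ) (hff' u hu).2).trans (Measure.map_map hφ hf')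

lemma indepFun_cond_preimage [IsFiniteMeasure P] (hf : Measurable f) (hfg : IndepFun f g P)
    {B : Set S} (hB : MeasurableSet B) (hB0 : P (f ⁻¹' B) ≠ 0) : IndepFun f g P[|f ⁻¹' B] := by
  have hjoint {s : Set S} {t : Set T} (hs : MeasurableSet s) (ht : MeasurableSet t) :
      P[|f ⁻¹' B] (f ⁻¹' s ∩ g ⁻¹' t) = P[|f ⁻¹' B] (f ⁻¹' s) * P (g ⁻¹' t) := by
    rw [cond_apply (hf hB), cond_apply (hf hB), ← Set.inter_assoc, ← Set.preimage_inter,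
      hfg.measure_inter_preimage_eq_mul _ _ (hB.inter hs) ht, mul_assoc]
  refine indepFun_iff_measure_inter_preimage_eq_mul.2 fun s t hs ht => ?_
  have hmarginal : P[|f ⁻¹' B] (g ⁻¹' t) = P (g ⁻¹' t) := by
    have := cond_isProbabilityMeasure hB0
    simpa using hjoint .univ ht
  rw [hjoint hs ht, hmarginal]

lemma CondIndepGiven.cond_left [IsFiniteMeasure P] (hf : Measurable f) (hh : FiniteValued h)
    (hfg : CondIndepGiven P f g h) {k : S → V} (hk : FiniteValued k) :
    CondIndepGiven P f g (fun ω => (h ω, k (f ω))) := by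
  rintro ⟨u, v⟩ huv
  rw [preimage_prodMk_singleton] at huv ⊢
  have hku : MeasurableSet ((fun ω => k (f ω)) ⁻¹' {v}) := hf (hk.measurableSet_fiber v)
  have hu : P (h ⁻¹' {u}) ≠ 0 := fun h0 => huv (measure_mono_null Set.inter_subset_left h0)
  rw [← cond_cond_eq_cond_inter (hh.measurableSet_fiber u) hku]
  have hpos := (cond_pos_of_inter_ne_zero (hh.measurableSet_fiber u) huv).ne'
  exact indepFun_cond_preimage (B := k ⁻¹' {v}) hf (hfg u hu) (hk.measurableSet_fiber v) hpos

lemma isProbabilityMeasure_of_measurePreserving [IsProbabilityMeasure P]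
    (hθ : MeasurePreserving θ Q P) : IsProbabilityMeasure Q :=
  ⟨by rw [← Set.preimage_univ (f := θ), hθ.measure_preimage nullMeasurableSet_univ, measure_univ]⟩

lemma measurePreserving_cond (hθ : MeasurePreserving θ Q P) {s : Set Ω} (hs : MeasurableSet s) :
    MeasurePreserving θ Q[|θ ⁻¹' s] P[|s] := by
  simpa only [ProbabilityTheory.cond, hθ.measure_preimage hs.nullMeasurableSet] using
    (hθ.restrict_preimage hs).smul_measure (P s)⁻¹

lemma indepFun_comp_measurePreserving (hθ : MeasurePreserving θ Q P) (hf : Measurable f)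
    (hg : Measurable g) (hfg : IndepFun f g P) :
    IndepFun (fun ω => f (θ ω)) (fun ω => g (θ ω)) Q := by
  refine indepFun_iff_measure_inter_preimage_eq_mul.2 fun s t hs ht => ?_
  have hpre {B : Set Ω} (hB : MeasurableSet B) : Q (θ ⁻¹' B) = P B :=
    hθ.measure_preimage hB.nullMeasurableSet
  exact (hpre ((hf hs).inter (hg ht))).trans <|
    (hfg.measure_inter_preimage_eq_mul s t hs ht).trans
      (congrArg₂ (· * ·) (hpre (hf hs)).symm (hpre (hg ht)).symm)

lemma CondIndepGiven.comp_measurePreserving (hθ : MeasurePreserving θ Q P) (hf : Measurable f)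
    (hg : Measurable g) (hh : FiniteValued h) (hfg : CondIndepGiven P f g h) :
    CondIndepGiven Q (fun ω => f (θ ω)) (fun ω => g (θ ω)) (fun ω => h (θ ω)) := by
  intro u hu
  have hfiber := hh.measurableSet_fiber u
  have hu' : P (h ⁻¹' {u}) ≠ 0 := hθ.measure_preimage hfiber.nullMeasurableSet ▸ hu
  exact indepFun_comp_measurePreserving (P := P[|h ⁻¹' {u}]) (measurePreserving_cond hθ hfiber)
    hf hg (hfg u hu')

lemma condIIDGiven_of_measurePreserving {θ' : Ω' → Ω} (hθ : MeasurePreserving θ Q P)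
    (hθ' : MeasurePreserving θ' Q P) (hh : FiniteValued h)
    (heq : (fun ω => h (θ ω)) =ᵐ[Q] fun ω => h (θ' ω))
    (hind : CondIndepGiven Q θ θ' fun ω => h (θ ω)) :
    CondIIDGiven Q θ θ' fun ω => h (θ ω) := by
  refine fun u hu => ⟨hind u hu, ?_⟩
  have hfiber := hh.measurableSet_fiber u
  have hset : (fun ω => h (θ ω)) ⁻¹' {u} =ᵐ[Q] (fun ω => h (θ' ω)) ⁻¹' {u} := heq.preimage {u}
  have hcond : Q[|(fun ω => h (θ ω)) ⁻¹' {u}] = Q[|(fun ω => h (θ' ω)) ⁻¹' {u}] := by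
    rw [ProbabilityTheory.cond, ProbabilityTheory.cond, measure_congr hset,
      Measure.restrict_congr_set hset]
  calc Measure.map θ Q[|(fun ω => h (θ ω)) ⁻¹' {u}]
      = P[|h ⁻¹' {u}] := (measurePreserving_cond hθ hfiber).map_eq
    _ = Measure.map θ' Q[|(fun ω => h (θ' ω)) ⁻¹' {u}] :=
        (measurePreserving_cond hθ' hfiber).map_eq.symm
    _ = Measure.map θ' Q[|(fun ω => h (θ ω)) ⁻¹' {u}] := by rw [hcond]

end ConditionalIndependence

section BSGCoupling

/-- The coupling of the Balog–Szemerédi–Gowers theorem for labels `a` and `b` on `(Ω, P)`: three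
points of `Ω` with law `P`, forming a path `θ₂ - θ₁ - θ₃` in which `θ₁, θ₂` share the label `b`, the
points `θ₁, θ₃` share the label `a`, and the points are otherwise independent. For `a = D_n(X)` and
`b = D_n(Y)` the paper's variables are `(X', Y') = (X, Y) ∘ θ₁`, `X'' = X ∘ θ₂` and
`Y'' = Y ∘ θ₃`. -/
structure IsBSGCoupling {Ω Ω' S T : Type*} [MeasurableSpace Ω] [MeasurableSpace Ω']
    (P : Measure Ω) (a : Ω → S) (b : Ω → T) (Q : Measure Ω') (θ₁ θ₂ θ₃ : Ω' → Ω) : Prop where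
  measurePreserving₁ : MeasurePreserving θ₁ Q P
  measurePreserving₂ : MeasurePreserving θ₂ Q P
  measurePreserving₃ : MeasurePreserving θ₃ Q P
  ae_eq₁₂ : (fun ω => b (θ₁ ω)) =ᵐ[Q] fun ω => b (θ₂ ω)
  ae_eq₁₃ : (fun ω => a (θ₁ ω)) =ᵐ[Q] fun ω => a (θ₃ ω)
  condIndep₁₂ : CondIndepGiven Q θ₁ θ₂ fun ω => b (θ₁ ω)
  condIndep₁₂₃ : CondIndepGiven Q (fun ω => (θ₁ ω, θ₂ ω)) θ₃ fun ω => a (θ₁ ω)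

variable {Ω Ω' S T : Type*} [MeasurableSpace Ω] [MeasurableSpace Ω'] {P : Measure Ω}
  {a : Ω → S} {b : Ω → T} {Q : Measure Ω'} {θ₁ θ₂ θ₃ : Ω' → Ω}

theorem exists_isBSGCoupling [IsProbabilityMeasure P] (ha : FiniteValued a)
    (hb : FiniteValued b) :
    ∃ Q : Measure ((Ω × Ω) × Ω), IsProbabilityMeasure Q ∧
      IsBSGCoupling P a b Q (fun ω => ω.1.1) (fun ω => ω.1.2) (fun ω => ω.2) := by
  obtain ⟨μ, hfst, hsnd, hlabel, hind⟩ :=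
    exists_measure_prod_of_label_law (μ := P) (P := P) hb hb fun _ => rfl
  have := isProbabilityMeasure_of_measurePreserving hfst
  have hlaw (s : S) : μ ((fun x => a x.1) ⁻¹' {s}) = P (a ⁻¹' {s}) :=
    hfst.measure_preimage (ha.measurableSet_fiber s).nullMeasurableSet
  obtain ⟨Q, hpair, hthird, hlabel', hind'⟩ :=
    exists_measure_prod_of_label_law (ha.comp_measurable measurable_fst) ha hlaw
  exact ⟨Q, isProbabilityMeasure_of_measurePreserving hpair,
    { measurePreserving₁ := hfst.comp hpair
      measurePreserving₂ := hsnd.comp hpair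
      measurePreserving₃ := hthird
      ae_eq₁₂ := hpair.quasiMeasurePreserving.tendsto_ae.eventually hlabel
      ae_eq₁₃ := hlabel'
      condIndep₁₂ := hind.comp_measurePreserving hpair measurable_fst measurable_snd
        (hb.comp_measurable measurable_fst)
      condIndep₁₂₃ := hind' }⟩

namespace IsBSGCoupling

lemma condIID₁₂ (hQ : IsBSGCoupling P a b Q θ₁ θ₂ θ₃) (hb : FiniteValued b) :
    CondIIDGiven Q θ₁ θ₂ fun ω => b (θ₁ ω) :=
  condIIDGiven_of_measurePreserving hQ.measurePreserving₁ hQ.measurePreserving₂ hb hQ.ae_eq₁₂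
    hQ.condIndep₁₂

lemma condIID₁₃ (hQ : IsBSGCoupling P a b Q θ₁ θ₂ θ₃) (ha : FiniteValued a) :
    CondIIDGiven Q θ₁ θ₃ fun ω => a (θ₁ ω) :=
  condIIDGiven_of_measurePreserving hQ.measurePreserving₁ hQ.measurePreserving₃ ha hQ.ae_eq₁₃
    (hQ.condIndep₁₂₃.comp measurable_fst measurable_id)

lemma entOf_ends (hQ : IsBSGCoupling P a b Q θ₁ θ₂ θ₃) :
    entOf Q (fun ω => ((a (θ₃ ω), b (θ₂ ω)), a (θ₂ ω), b (θ₃ ω))) =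
      entOf Q fun ω => ((a (θ₂ ω), b (θ₃ ω)), a (θ₁ ω), b (θ₁ ω)) := by
  rw [entOf_prodMk_comm]
  refine entOf_congr ?_
  filter_upwards [hQ.ae_eq₁₂, hQ.ae_eq₁₃] with ω hb ha
  simp only [ha, hb]

variable [IsFiniteMeasure Q]

lemma condIndep₂₃ (hQ : IsBSGCoupling P a b Q θ₁ θ₂ θ₃)
    (ha : FiniteValued a) (hb : FiniteValued b) :
    CondIndepGiven Q θ₂ θ₃ fun ω => (a (θ₁ ω), b (θ₁ ω)) :=
  (hQ.condIndep₁₂₃.cond_left (hQ.measurePreserving₁.measurable.prodMk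
    hQ.measurePreserving₂.measurable)
    (ha.comp_measurable hQ.measurePreserving₁.measurable)
    (hb.comp_measurable measurable_fst)).comp measurable_snd measurable_id

lemma condEntOf₂ [MeasurableSpace S] [MeasurableSingletonClass S]
    (hQ : IsBSGCoupling P a b Q θ₁ θ₂ θ₃) (ha : FiniteValued a)
    (hb : FiniteValued b) :
    condEntOf Q (fun ω => a (θ₂ ω)) (fun ω => (a (θ₁ ω), b (θ₁ ω))) =
      entOf P (fun ω => (a ω, b ω)) - entOf P b := by
  have hθ₁ := hQ.measurePreserving₁
  have hθ₂ := hQ.measurePreserving₂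
  have hiid := (hQ.condIID₁₂ hb).comp ha.measurable hθ₁.measurable hθ₂.measurable
  rw [hiid.condEntOf_prodMk (ha.comp_measurable hθ₁.measurable)
    (ha.comp_measurable hθ₂.measurable) (hb.comp_measurable hθ₁.measurable), condEntOf,
    entOf_comp_measurePreserving hθ₁ (ha.prodMk hb), entOf_comp_measurePreserving hθ₁ hb]

lemma condEntOf₃ [MeasurableSpace T] [MeasurableSingletonClass T]
    (hQ : IsBSGCoupling P a b Q θ₁ θ₂ θ₃) (ha : FiniteValued a)
    (hb : FiniteValued b) :
    condEntOf Q (fun ω => b (θ₃ ω)) (fun ω => (a (θ₁ ω), b (θ₁ ω))) =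
      entOf P (fun ω => (a ω, b ω)) - entOf P a := by
  have hθ₁ := hQ.measurePreserving₁
  have hθ₃ := hQ.measurePreserving₃
  have hiid := (hQ.condIID₁₃ ha).comp hb.measurable hθ₁.measurable hθ₃.measurable
  rw [← condEntOf_comp_of_injective Prod.swap_injective]
  simp only [Prod.swap_prod_mk]
  rw [hiid.condEntOf_prodMk (hb.comp_measurable hθ₁.measurable)
    (hb.comp_measurable hθ₃.measurable) (ha.comp_measurable hθ₁.measurable), condEntOf,
    entOf_comp_measurePreserving hθ₁ (hb.prodMk ha), entOf_comp_measurePreserving hθ₁ ha,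
    entOf_prodMk_comm]

theorem entOf_labels [MeasurableSpace S] [MeasurableSingletonClass S] [MeasurableSpace T]
    [MeasurableSingletonClass T] (hQ : IsBSGCoupling P a b Q θ₁ θ₂ θ₃) (ha : FiniteValued a)
    (hb : FiniteValued b) :
    entOf Q (fun ω => ((a (θ₂ ω), b (θ₃ ω)), a (θ₁ ω), b (θ₁ ω))) =
      3 * entOf P (fun ω => (a ω, b ω)) - entOf P a - entOf P b := by
  have hθ₁ := hQ.measurePreserving₁
  have hadd := CondIndepGiven.condEntOf_prodMk
    (ha.comp_measurable hQ.measurePreserving₂.measurable)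
    (hb.comp_measurable hQ.measurePreserving₃.measurable)
    ((ha.prodMk hb).comp_measurable hθ₁.measurable)
    ((hQ.condIndep₂₃ ha hb).comp ha.measurable hb.measurable)
  rw [hQ.condEntOf₂ ha hb, hQ.condEntOf₃ ha hb, condEntOf,
    entOf_comp_measurePreserving hθ₁ (ha.prodMk hb)] at hadd
  linarith

end IsBSGCoupling

end BSGCoupling

section Discretization

variable {Ω S : Type*} [MeasurableSpace Ω] {P : Measure Ω} {n L : ℕ} {R κ : ℝ} {D : Set ℝ}
  {f : ℝ → ℝ}

lemma measurable_Dn (n : ℕ) : Measurable (Dn n) := by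
  unfold Dn
  fun_prop

lemma abs_sub_le_of_Dn_eq {x y : ℝ} (h : Dn n x = Dn n y) : |x - y| ≤ 1 / 2 ^ n := by
  have hpow : (0 : ℝ) < 2 ^ n := by positivity
  have hfloor : ⌊(2 : ℝ) ^ n * x⌋ = ⌊(2 : ℝ) ^ n * y⌋ :=
    Int.cast_injective ((div_left_inj' hpow.ne').1 h)
  have := Int.abs_sub_lt_one_of_floor_eq_floor hfloor
  rw [← mul_sub, abs_mul, abs_of_pos hpow] at this
  exact (le_div_iff₀' hpow).2 this.le

lemma WeaklyBiLipschitzOn.abs_sub_apply_le_of_Dn_eq (hf : WeaklyBiLipschitzOn f D κ L)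
    (hκ : 0 ≤ κ) {x y : ℝ} (hx : x ∈ D) (hy : y ∈ D) (hxy : Dn n x = Dn n y) :
    |f x - f y| ≤ κ / 2 ^ n :=
  calc |f x - f y| ≤ κ * |x - y| := hf.1 x hx y hy
    _ ≤ κ * (1 / 2 ^ n) := mul_le_mul_of_nonneg_left (abs_sub_le_of_Dn_eq hxy) hκ
    _ = κ / 2 ^ n := mul_one_div _ _

lemma exists_finset_Dn_mem (hR : 0 ≤ R) {T : Set ℝ}
    (hT : ∀ x ∈ T, ∀ y ∈ T, |x - y| ≤ R / 2 ^ n) :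
    ∃ A : Finset ℝ, (A.card : ℝ) ≤ 2 * R + 2 ∧ ∀ x ∈ T, Dn n x ∈ A := by
  have hpow : (0 : ℝ) < 2 ^ n := by positivity
  rcases T.eq_empty_or_nonempty with rfl | ⟨y, hy⟩
  · exact ⟨∅, by simp; linarith, by simp⟩
  let I := Finset.Icc ⌊2 ^ n * y - R⌋ ⌊2 ^ n * y + R⌋
  refine ⟨I.image fun m : ℤ => (m : ℝ) / 2 ^ n, ?_, fun x hx => ?_⟩
  · have hfloor : ⌊2 ^ n * y - R⌋ ≤ ⌊2 ^ n * y + R⌋ := Int.floor_le_floor (by linarith)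
    calc ((I.image fun m : ℤ => (m : ℝ) / 2 ^ n).card : ℝ)
        ≤ I.card := mod_cast Finset.card_image_le
      _ = ⌊2 ^ n * y + R⌋ + 1 - ⌊2 ^ n * y - R⌋ := by
        rw [← Int.cast_natCast, Int.card_Icc_of_le _ _ (hfloor.trans (Int.le_add_one le_rfl)),
          Int.cast_sub, Int.cast_add, Int.cast_one]
      _ ≤ 2 * R + 2 := by
        linarith [Int.floor_le (2 ^ n * y + R), Int.lt_floor_add_one (2 ^ n * y - R)]
  · have hdist : |2 ^ n * x - 2 ^ n * y| ≤ R := by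
      rw [← mul_sub, abs_mul, abs_of_pos hpow]
      exact (le_div_iff₀' hpow).1 (hT x hx y hy)
    obtain ⟨hlower, hupper⟩ := abs_le.1 hdist
    exact Finset.mem_image.2 ⟨⌊2 ^ n * x⌋, Finset.mem_Icc.2
      ⟨Int.floor_le_floor (by linarith), Int.floor_le_floor (by linarith)⟩, rfl⟩

lemma WeaklyBiLipschitzOn.exists_finset_Dn_mem (hf : WeaklyBiLipschitzOn f D κ L) (hκ : 0 ≤ κ)
    (hR : 0 ≤ R) {T : Set ℝ} (hTD : T ⊆ D)
    (hT : ∀ x ∈ T, ∀ y ∈ T, |f x - f y| ≤ R / 2 ^ n) :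
    ∃ A : Finset ℝ, (A.card : ℝ) ≤ L * (2 * (κ * R) + 2) ∧ ∀ x ∈ T, Dn n x ∈ A := by
  obtain ⟨-, piece, hcover, hpiece⟩ := hf
  have hdist (i : Fin L) : ∀ x ∈ T ∩ piece i, ∀ y ∈ T ∩ piece i, |x - y| ≤ κ * R / 2 ^ n := by
    intro x hx y hy
    calc |x - y| ≤ κ * |f x - f y| := hpiece i x ⟨hTD hx.1, hx.2⟩ y ⟨hTD hy.1, hy.2⟩
      _ ≤ κ * (R / 2 ^ n) := mul_le_mul_of_nonneg_left (hT x hx.1 y hy.1) hκ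
      _ = κ * R / 2 ^ n := (mul_div_assoc _ _ _).symm
  choose A hcard hA using fun i => _root_.exists_finset_Dn_mem (mul_nonneg hκ hR) (hdist i)
  refine ⟨Finset.univ.biUnion A, ?_, fun x hx => ?_⟩
  · calc ((Finset.univ.biUnion A).card : ℝ)
        ≤ ∑ i, ((A i).card : ℝ) := mod_cast Finset.card_biUnion_le
      _ ≤ ∑ _i : Fin L, (2 * (κ * R) + 2) := Finset.sum_le_sum fun i _ => hcard i
      _ = L * (2 * (κ * R) + 2) := by simp [mul_add]
  · obtain ⟨i, hi⟩ := Set.mem_iUnion.1 (hcover (hTD hx))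
    exact Finset.mem_biUnion.2 ⟨i, Finset.mem_univ i, hA i x ⟨hx, hi⟩⟩

lemma WeaklyBiLipschitzOn.exists_abs_le (hf : WeaklyBiLipschitzOn f D κ L) {c : ℝ}
    (hD : ∀ x ∈ D, |x| ≤ c) : ∃ C, ∀ x ∈ D, |f x| ≤ C := by
  rcases D.eq_empty_or_nonempty with rfl | ⟨y, hy⟩
  · exact ⟨0, by simp⟩
  refine ⟨|κ| * (2 * c) + |f y|, fun x hx => ?_⟩
  have hxy : |x - y| ≤ 2 * c := (abs_sub x y).trans (by linarith [hD x hx, hD y hy])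
  calc |f x| = |f x - f y + f y| := by rw [sub_add_cancel]
    _ ≤ |f x - f y| + |f y| := abs_add_le _ _
    _ ≤ |κ| * (2 * c) + |f y| := by
      gcongr
      exact (hf.1 x hx y hy).trans (mul_le_mul (le_abs_self κ) hxy (abs_nonneg _) (abs_nonneg κ))

lemma finiteValued_Dn {Z : Ω → ℝ} (hZ : Measurable Z) {C : ℝ} (hC : ∀ ω, |Z ω| ≤ C) :
    FiniteValued fun ω => Dn n (Z ω) where
  measurableSet_fiber s := (measurable_Dn n).comp hZ (measurableSet_singleton s)
  finite_range := by
    have hdist : ∀ x ∈ Set.range Z, ∀ y ∈ Set.range Z, |x - y| ≤ 2 ^ n * (2 * |C|) / 2 ^ n := by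
      rintro _ ⟨ω, rfl⟩ _ ⟨ω', rfl⟩
      rw [mul_div_cancel_left₀ _ (by positivity)]
      linarith [abs_sub (Z ω) (Z ω'), hC ω, hC ω', le_abs_self C]
    obtain ⟨A, -, hA⟩ := exists_finset_Dn_mem (by positivity) hdist
    exact A.finite_toSet.subset (Set.range_subset_iff.2 fun ω => hA _ ⟨ω, rfl⟩)

lemma WeaklyBiLipschitzOn.finiteValued_Dn_apply_add {X Y : Ω → ℝ} {g : ℝ → ℝ} {E : Set ℝ} {c : ℝ}
    (hf : WeaklyBiLipschitzOn f D κ L) (hg : WeaklyBiLipschitzOn g E κ L)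
    (hfX : Measurable fun ω => f (X ω)) (hgY : Measurable fun ω => g (Y ω))
    (hD : ∀ x ∈ D, |x| ≤ c) (hE : ∀ y ∈ E, |y| ≤ c) (hXD : ∀ ω, X ω ∈ D) (hYE : ∀ ω, Y ω ∈ E) :
    FiniteValued fun ω => Dn n (f (X ω) + g (Y ω)) := by
  obtain ⟨C, hC⟩ := hf.exists_abs_le hD
  obtain ⟨C', hC'⟩ := hg.exists_abs_le hE
  exact finiteValued_Dn (hfX.add hgY) fun ω =>
    (abs_add_le _ _).trans (add_le_add (hC _ (hXD ω)) (hC' _ (hYE ω)))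

variable [IsProbabilityMeasure P] {M δ : ℝ} {Z u v : Ω → ℝ} {h : Ω → S}

lemma condEntOf_Dn_le_logb (hZ : FiniteValued fun ω => Dn n (Z ω)) (hh : FiniteValued h)
    (hR : 0 ≤ R) {G : Set Ω} (hG : ∀ᵐ ω ∂P, ω ∈ G)
    (hdist : ∀ ω ∈ G, ∀ ω' ∈ G, h ω = h ω' → |Z ω - Z ω'| ≤ R / 2 ^ n) (hM : 2 * R + 2 ≤ M) :
    condEntOf P (fun ω => Dn n (Z ω)) h ≤ logb 2 M := by
  refine condEntOf_le_logb hZ hh fun s => ?_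
  obtain ⟨A, hcard, hA⟩ := exists_finset_Dn_mem (n := n) (T := Z '' (G ∩ h ⁻¹' {s})) hR <| by
    rintro _ ⟨ω, hω, rfl⟩ _ ⟨ω', hω', rfl⟩
    exact hdist ω hω.1 ω' hω'.1 (hω.2.trans hω'.2.symm)
  refine ⟨A, hcard.trans hM, ?_⟩
  filter_upwards [hG] with ω hω hs using hA _ ⟨ω, ⟨hω, hs⟩, rfl⟩

lemma condEntOf_Dn_add_le_logb (huv : FiniteValued fun ω => Dn n (u ω + v ω))
    (hh : FiniteValued h) (hδ : 0 ≤ δ) (hu : ∀ ω ω', h ω = h ω' → |u ω - u ω'| ≤ δ / 2 ^ n)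
    (hv : ∀ ω ω', h ω = h ω' → |v ω - v ω'| ≤ δ / 2 ^ n) (hM : 4 * δ + 2 ≤ M) :
    condEntOf P (fun ω => Dn n (u ω + v ω)) h ≤ logb 2 M := by
  refine condEntOf_Dn_le_logb (R := 2 * δ) huv hh (by linarith) (G := Set.univ) (by simp)
    (fun ω _ ω' _ hω => ?_) (by linarith)
  calc |u ω + v ω - (u ω' + v ω')| = |(u ω - u ω') + (v ω - v ω')| := by ring_nf
    _ ≤ δ / 2 ^ n + δ / 2 ^ n := (abs_add_le _ _).trans (add_le_add (hu ω ω' hω) (hv ω ω' hω))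
    _ = 2 * δ / 2 ^ n := by ring

lemma condEntOf_Dn_le_logb_of_add (hf : WeaklyBiLipschitzOn f D κ L) (hκ : 0 ≤ κ)
    (hZD : ∀ ω, Z ω ∈ D) (hZ : FiniteValued fun ω => Dn n (Z ω)) (hh : FiniteValued h)
    (hsum : FiniteValued fun ω => Dn n (u ω + f (Z ω))) (hδ : 0 ≤ δ)
    (hu : ∀ ω ω', h ω = h ω' → |u ω - u ω'| ≤ δ / 2 ^ n)
    (hM : L * (2 * (κ * (1 + δ)) + 2) ≤ M) :
    condEntOf P (fun ω => Dn n (Z ω)) (fun ω => (h ω, Dn n (u ω + f (Z ω)))) ≤ logb 2 M := by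
  refine condEntOf_le_logb hZ (hh.prodMk hsum) fun s => ?_
  obtain ⟨A, hcard, hA⟩ := hf.exists_finset_Dn_mem (n := n)
    (T := Z '' ((fun ω => (h ω, Dn n (u ω + f (Z ω)))) ⁻¹' {s})) hκ (add_nonneg zero_le_one hδ)
    (by rintro _ ⟨ω, -, rfl⟩; exact hZD ω) <| by
      rintro _ ⟨ω, hω, rfl⟩ _ ⟨ω', hω', rfl⟩
      obtain ⟨hhω, hsω⟩ := Prod.mk.inj (hω.trans hω'.symm)
      calc |f (Z ω) - f (Z ω')|
          = |(u ω + f (Z ω) - (u ω' + f (Z ω'))) - (u ω - u ω')| := by ring_nf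
        _ ≤ 1 / 2 ^ n + δ / 2 ^ n :=
          (abs_sub _ _).trans (add_le_add (abs_sub_le_of_Dn_eq hsω) (hu ω ω' hhω))
        _ = (1 + δ) / 2 ^ n := (add_div _ _ _).symm
  exact ⟨A, hcard.trans hM, .of_forall fun ω hs => hA _ ⟨ω, hs, rfl⟩⟩

lemma condEntOf_Dn_add_path_le_logb {u₁ u₂ u₃ v₁ v₂ v₃ : Ω → ℝ}
    (ht : FiniteValued fun ω => Dn n (u₂ ω + v₃ ω))
    (hs₁ : FiniteValued fun ω => Dn n (u₁ ω + v₁ ω))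
    (hs₂ : FiniteValued fun ω => Dn n (u₂ ω + v₂ ω))
    (hs₃ : FiniteValued fun ω => Dn n (u₃ ω + v₃ ω)) (hδ : 0 ≤ δ)
    (hu : ∀ᵐ ω ∂P, |u₁ ω - u₃ ω| ≤ δ / 2 ^ n) (hv : ∀ᵐ ω ∂P, |v₁ ω - v₂ ω| ≤ δ / 2 ^ n)
    (hM : 8 * δ + 8 ≤ M) :
    condEntOf P (fun ω => Dn n (u₂ ω + v₃ ω))
      (fun ω => (Dn n (u₁ ω + v₁ ω), Dn n (u₂ ω + v₂ ω), Dn n (u₃ ω + v₃ ω))) ≤ logb 2 M := by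
  refine condEntOf_Dn_le_logb (R := 4 * δ + 3) ht (hs₁.prodMk (hs₂.prodMk hs₃)) (by linarith)
    (hu.and hv) (fun ω hω ω' hω' hs => ?_) (by linarith)
  obtain ⟨h₁, h₂₃⟩ := Prod.mk.inj hs
  obtain ⟨h₂, h₃⟩ := Prod.mk.inj h₂₃
  have hcombine : (4 * δ + 3) / 2 ^ n = 4 * (δ / 2 ^ n) + 3 * (1 / 2 ^ n) := by ring
  have hd₁ := abs_le.1 (abs_sub_le_of_Dn_eq h₁)
  have hd₂ := abs_le.1 (abs_sub_le_of_Dn_eq h₂)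
  have hd₃ := abs_le.1 (abs_sub_le_of_Dn_eq h₃)
  have hu₁ := abs_le.1 hω.1
  have hu₂ := abs_le.1 hω'.1
  have hv₁ := abs_le.1 hω.2
  have hv₂ := abs_le.1 hω'.2
  rw [hcombine, abs_le]
  constructor <;> linarith

end Discretization

section Sums

lemma entOf_add_entOf_le_of_condEntOf_le {Ω S T U V : Type*} [MeasurableSpace Ω] {P : Measure Ω}
    [IsProbabilityMeasure P] {t : Ω → S} {s₁ s₂ s₃ : Ω → T} {a₂ a₃ : Ω → U} {b₂ b₃ : Ω → V}
    (ht : FiniteValued t) (hs₁ : FiniteValued s₁) (hs₂ : FiniteValued s₂) (hs₃ : FiniteValued s₃)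
    (ha₂ : FiniteValued a₂) (ha₃ : FiniteValued a₃) (hb₂ : FiniteValued b₂)
    (hb₃ : FiniteValued b₃) {ℓ : ℝ}
    (hpath : condEntOf P t (fun ω => (s₁ ω, s₂ ω, s₃ ω)) ≤ ℓ)
    (hends : condEntOf P t (fun ω => (a₂ ω, b₃ ω)) ≤ ℓ)
    (ha : condEntOf P a₃ (fun ω => (b₃ ω, s₃ ω)) ≤ ℓ)
    (hb : condEntOf P b₂ (fun ω => (a₂ ω, s₂ ω)) ≤ ℓ) :
    entOf P t + entOf P (fun ω => ((a₃ ω, b₂ ω), a₂ ω, b₃ ω)) ≤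
      entOf P s₁ + entOf P s₂ + entOf P s₃ + entOf P a₂ + entOf P b₃ + 4 * ℓ := by
  have hsums := hs₁.prodMk (hs₂.prodMk hs₃)
  have hgiven := hsums.prodMk (ha₂.prodMk hb₃)
  have hsplit := condEntOf_prodMk_le (P := P) ha₃ hb₂ hgiven
  have ha' := condEntOf_le_condEntOf_comp (P := P) ha₃ hgiven fun q => (q.2.2, q.1.2.2)
  have hb' := condEntOf_le_condEntOf_comp (P := P) hb₂ hgiven fun q => (q.2.1, q.1.2.1)
  have hshannon :=
    entOf_add_entOf_prodMk_le (P := P) ht hsums (ha₂.prodMk hb₃) (ha₃.prodMk hb₂)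
  have hsum₁ := entOf_prodMk_le (P := P) hs₁ (hs₂.prodMk hs₃)
  have hsum₂ := entOf_prodMk_le (P := P) hs₂ hs₃
  have hlabels := entOf_prodMk_le (P := P) ha₂ hb₃
  linarith

lemma counts_le_sixteen_mul (L : ℕ) {κ : ℝ} (hκ : 2 ≤ κ) :
    8 * κ + 8 ≤ 16 * (L + 1) * κ ^ 2 ∧ 4 * κ + 2 ≤ 16 * (L + 1) * κ ^ 2 ∧
      L * (2 * (κ * (1 + κ)) + 2) ≤ 16 * (L + 1) * κ ^ 2 := by
  have hL : (0 : ℝ) ≤ L := L.cast_nonneg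
  have hκ_sq : 2 * κ ≤ κ ^ 2 := by nlinarith
  have hLκ : 0 ≤ L * κ ^ 2 := by positivity
  have hLκ_sq : L * (2 * κ) ≤ L * κ ^ 2 := mul_le_mul_of_nonneg_left hκ_sq hL
  have hL_two : L * 2 ≤ L * κ := mul_le_mul_of_nonneg_left hκ hL
  refine ⟨?_, ?_, ?_⟩ <;> linarith

variable {Ω Ω' : Type*} [MeasurableSpace Ω] [MeasurableSpace Ω'] {P : Measure Ω}
  {Q : Measure Ω'} [IsProbabilityMeasure Q] {θ₁ θ₂ θ₃ : Ω' → Ω} {n L : ℕ} {X Y : Ω → ℝ}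
  {c κ : ℝ} {f g : ℝ → ℝ}

lemma entOf_Dn_add_le_of_path (hθ₁ : Measurable θ₁) (hθ₂ : Measurable θ₂) (hθ₃ : Measurable θ₃)
    (hX : Measurable X) (hY : Measurable Y) (hXc : ∀ ω, |X ω| ≤ c) (hYc : ∀ ω, |Y ω| ≤ c)
    (hX₁₃ : (fun ω => Dn n (X (θ₁ ω))) =ᵐ[Q] fun ω => Dn n (X (θ₃ ω)))
    (hY₁₂ : (fun ω => Dn n (Y (θ₁ ω))) =ᵐ[Q] fun ω => Dn n (Y (θ₂ ω)))
    (hκ : 2 ≤ κ) (hfm : Measurable f) (hgm : Measurable g)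
    (hf : WeaklyBiLipschitzOn f (Set.range X) κ L) (hg : WeaklyBiLipschitzOn g (Set.range Y) κ L) :
    Hn Q n (fun ω => f (X (θ₂ ω)) + g (Y (θ₃ ω))) +
        entOf Q (fun ω => ((Dn n (X (θ₃ ω)), Dn n (Y (θ₂ ω))), Dn n (X (θ₂ ω)), Dn n (Y (θ₃ ω)))) ≤
      Hn Q n (fun ω => f (X (θ₁ ω)) + g (Y (θ₁ ω))) +
        Hn Q n (fun ω => f (X (θ₂ ω)) + g (Y (θ₂ ω))) +
        Hn Q n (fun ω => f (X (θ₃ ω)) + g (Y (θ₃ ω))) +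
        Hn Q n (fun ω => X (θ₂ ω)) + Hn Q n (fun ω => Y (θ₃ ω)) +
        4 * logb 2 (16 * (L + 1) * κ ^ 2) := by
  have hκ0 : 0 ≤ κ := by linarith
  obtain ⟨hMpath, hMends, hMlabel⟩ := counts_le_sixteen_mul L hκ
  have ha {θ : Ω' → Ω} (hθ : Measurable θ) : FiniteValued fun ω => Dn n (X (θ ω)) :=
    finiteValued_Dn (hX.comp hθ) fun _ => hXc _
  have hb {θ : Ω' → Ω} (hθ : Measurable θ) : FiniteValued fun ω => Dn n (Y (θ ω)) :=
    finiteValued_Dn (hY.comp hθ) fun _ => hYc _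
  have hs {θ θ' : Ω' → Ω} (hθ : Measurable θ) (hθ' : Measurable θ') :
      FiniteValued fun ω => Dn n (f (X (θ ω)) + g (Y (θ' ω))) :=
    hf.finiteValued_Dn_apply_add hg (hfm.comp (hX.comp hθ)) (hgm.comp (hY.comp hθ'))
      (Set.forall_mem_range.2 hXc) (Set.forall_mem_range.2 hYc) (fun _ => ⟨_, rfl⟩)
      fun _ => ⟨_, rfl⟩
  have hfX {ω ω'} : Dn n (X ω) = Dn n (X ω') → |f (X ω) - f (X ω')| ≤ κ / 2 ^ n :=
    hf.abs_sub_apply_le_of_Dn_eq hκ0 ⟨_, rfl⟩ ⟨_, rfl⟩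
  have hgY {ω ω'} : Dn n (Y ω) = Dn n (Y ω') → |g (Y ω) - g (Y ω')| ≤ κ / 2 ^ n :=
    hg.abs_sub_apply_le_of_Dn_eq hκ0 ⟨_, rfl⟩ ⟨_, rfl⟩
  have hpath := condEntOf_Dn_add_path_le_logb (hs hθ₂ hθ₃) (hs hθ₁ hθ₁) (hs hθ₂ hθ₂) (hs hθ₃ hθ₃)
    hκ0 (hX₁₃.mono fun _ => hfX) (hY₁₂.mono fun _ => hgY) hMpath
  have hends := condEntOf_Dn_add_le_logb (P := Q) (hs hθ₂ hθ₃) ((ha hθ₂).prodMk (hb hθ₃)) hκ0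
    (fun _ _ h => hfX (congrArg Prod.fst h)) (fun _ _ h => hgY (congrArg Prod.snd h)) hMends
  have hs₃ := hs hθ₃ hθ₃
  simp only [add_comm (f _)] at hs₃
  have hX₃ := condEntOf_Dn_le_logb_of_add (P := Q) hf hκ0 (fun _ => ⟨_, rfl⟩) (ha hθ₃) (hb hθ₃)
    hs₃ hκ0 (fun _ _ => hgY) hMlabel
  simp only [add_comm (g _)] at hX₃
  have hY₂ := condEntOf_Dn_le_logb_of_add (P := Q) hg hκ0 (fun _ => ⟨_, rfl⟩) (hb hθ₂) (ha hθ₂)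
    (hs hθ₂ hθ₂) hκ0 (fun _ _ => hfX) hMlabel
  exact entOf_add_entOf_le_of_condEntOf_le (hs hθ₂ hθ₃) (hs hθ₁ hθ₁) (hs hθ₂ hθ₂) (hs hθ₃ hθ₃)
    (ha hθ₂) (ha hθ₃) (hb hθ₂) (hb hθ₃) hpath hends hX₃ hY₂

theorem IsBSGCoupling.condEntOf_Dn_add_le
    (hQ : IsBSGCoupling P (fun ω => Dn n (X ω)) (fun ω => Dn n (Y ω)) Q θ₁ θ₂ θ₃)
    (hX : Measurable X) (hY : Measurable Y) (hXc : ∀ ω, |X ω| ≤ c) (hYc : ∀ ω, |Y ω| ≤ c)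
    (hκ : 2 ≤ κ) (hfm : Measurable f) (hgm : Measurable g)
    (hf : WeaklyBiLipschitzOn f (Set.range X) κ L) (hg : WeaklyBiLipschitzOn g (Set.range Y) κ L) :
    condEntOf Q (fun ω => Dn n (f (X (θ₂ ω)) + g (Y (θ₃ ω))))
        (fun ω => (Dn n (X (θ₁ ω)), Dn n (Y (θ₁ ω)))) ≤
      3 * Hn P n (fun ω => f (X ω) + g (Y ω)) + 2 * (Hn P n X + Hn P n Y) - 3 * Hn2 P n X Y +
        4 * logb 2 (16 * (L + 1) * κ ^ 2) := by
  have hθ₁ := hQ.measurePreserving₁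
  have hθ₂ := hQ.measurePreserving₂
  have hθ₃ := hQ.measurePreserving₃
  have ha : FiniteValued fun ω => Dn n (X ω) := finiteValued_Dn hX hXc
  have hb : FiniteValued fun ω => Dn n (Y ω) := finiteValued_Dn hY hYc
  have hD : ∀ x ∈ Set.range X, |x| ≤ c := Set.forall_mem_range.2 hXc
  have hE : ∀ y ∈ Set.range Y, |y| ≤ c := Set.forall_mem_range.2 hYc
  have hs : FiniteValued fun ω => Dn n (f (X ω) + g (Y ω)) :=
    hf.finiteValued_Dn_apply_add hg (hfm.comp hX) (hgm.comp hY) hD hE (fun _ => ⟨_, rfl⟩)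
      fun _ => ⟨_, rfl⟩
  have ht : FiniteValued fun ω => Dn n (f (X (θ₂ ω)) + g (Y (θ₃ ω))) :=
    hf.finiteValued_Dn_apply_add hg (hfm.comp (hX.comp hθ₂.measurable))
      (hgm.comp (hY.comp hθ₃.measurable)) hD hE (fun _ => ⟨_, rfl⟩) fun _ => ⟨_, rfl⟩
  have hpath := entOf_Dn_add_le_of_path hθ₁.measurable hθ₂.measurable hθ₃.measurable hX hY hXc hYc
    hQ.ae_eq₁₃ hQ.ae_eq₁₂ hκ hfm hgm hf hg
  have hlabels := hQ.entOf_ends.trans (hQ.entOf_labels ha hb)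
  have hdrop := condEntOf_le_entOf (P := Q) ht ((ha.prodMk hb).comp_measurable hθ₁.measurable)
  have hsum {θ : Ω' → Ω} (hθ : MeasurePreserving θ Q P) :
      Hn Q n (fun ω => f (X (θ ω)) + g (Y (θ ω))) = Hn P n fun ω => f (X ω) + g (Y ω) :=
    entOf_comp_measurePreserving hθ hs
  have hX₂ : Hn Q n (fun ω => X (θ₂ ω)) = Hn P n X := entOf_comp_measurePreserving hθ₂ ha
  have hY₃ : Hn Q n (fun ω => Y (θ₃ ω)) = Hn P n Y := entOf_comp_measurePreserving hθ₃ hb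
  rw [hsum hθ₁, hsum hθ₂, hsum hθ₃, hX₂, hY₃, hlabels] at hpath
  unfold Hn at hpath ⊢
  unfold Hn2
  linarith

end Sums

lemma logb_mul_sq_le {C κ : ℝ} (hC : 1 ≤ C) (hκ : 2 ≤ κ) :
    logb 2 (C * κ ^ 2) ≤ (logb 2 C + 2) * logb 2 κ := by
  have hκ1 : 1 ≤ logb 2 κ := by
    rw [le_logb_iff_rpow_le one_lt_two (by linarith), rpow_one]
    exact hκ
  have hC0 : 0 ≤ logb 2 C := logb_nonneg one_lt_two hC
  calc logb 2 (C * κ ^ 2) = logb 2 C + 2 * logb 2 κ := by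
        rw [logb_mul (by linarith) (by positivity), logb_pow, Nat.cast_ofNat]
    _ ≤ (logb 2 C + 2) * logb 2 κ := by nlinarith

/-- Discretized entropy Balog–Szemerédi–Gowers theorem. For any bound `L` on the number of
pieces in the weak bi-Lipschitz decompositions, there is a constant `A > 0` such that:
given `n` and a bounded bivariate random variable `(X,Y)` with
`Hₙ(X) + Hₙ(Y) − Hₙ(X,Y) ≤ log K₁`, there exists `(X'', Y', X', Y'')` (on some probability
space) with: (i) `(X',Y') ≡ (X,Y)`; (ii) `X', X''` conditionally i.i.d. given `Dₙ(Y')`;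
(iii) `Y', Y''` conditionally i.i.d. given `Dₙ(X')`; (iv) `(X'',Y')` and `Y''` conditionally
independent given `Dₙ(X')`, and in particular `X''`, `Y''` conditionally independent given
`Dₙ(X',Y')`; moreover `Hₙ(X''|X',Y') ≥ Hₙ(X) − log K₁`, `Hₙ(Y''|X',Y') ≥ Hₙ(Y) − log K₁`;
and for all `κ ≥ 2` and weakly κ-bi-Lipschitz `f, g` with
`Hₙ(f(X)+g(Y)) − (Hₙ(X)+Hₙ(Y))/2 ≤ log K₂`, one has
`Hₙ(f(X'')+g(Y'') | X',Y') − (Hₙ(X)+Hₙ(Y))/2 ≤ 4 log K₁ + 3 log K₂ + A log κ`. -/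
theorem discretized_entropy_BSG (L : ℕ) :
    ∃ A : ℝ, 0 < A ∧
      ∀ (n : ℕ) (Ω : Type) (mΩ : MeasurableSpace Ω) (P : Measure Ω),
        IsProbabilityMeasure P →
        ∀ (X Y : Ω → ℝ), Measurable X → Measurable Y →
          ∀ c : ℝ, (∀ ω, |X ω| ≤ c ∧ |Y ω| ≤ c) →
            ∀ K₁ : ℝ, Hn P n X + Hn P n Y - Hn2 P n X Y ≤ Real.logb 2 K₁ →
              ∃ (Ω' : Type) (mΩ' : MeasurableSpace Ω') (P' : Measure Ω'),
                IsProbabilityMeasure P' ∧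
                ∃ X'' Y' X' Y'' : Ω' → ℝ,
                  Measurable X'' ∧ Measurable Y' ∧ Measurable X' ∧ Measurable Y'' ∧
                  Measure.map (fun ω => (X' ω, Y' ω)) P' =
                    Measure.map (fun ω => (X ω, Y ω)) P ∧
                  CondIIDGiven P' X' X'' (fun ω => Dn n (Y' ω)) ∧
                  CondIIDGiven P' Y' Y'' (fun ω => Dn n (X' ω)) ∧
                  CondIndepGiven P' (fun ω => (X'' ω, Y' ω)) Y'' (fun ω => Dn n (X' ω)) ∧
                  CondIndepGiven P' X'' Y'' (fun ω => (Dn n (X' ω), Dn n (Y' ω))) ∧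
                  Hn P n X - Real.logb 2 K₁ ≤
                    condEntOf P' (fun ω => Dn n (X'' ω))
                      (fun ω => (Dn n (X' ω), Dn n (Y' ω))) ∧
                  Hn P n Y - Real.logb 2 K₁ ≤
                    condEntOf P' (fun ω => Dn n (Y'' ω))
                      (fun ω => (Dn n (X' ω), Dn n (Y' ω))) ∧
                  ∀ (κ : ℝ), 2 ≤ κ → ∀ f g : ℝ → ℝ, Measurable f → Measurable g →
                    WeaklyBiLipschitzOn f (Set.range X) κ L →
                    WeaklyBiLipschitzOn g (Set.range Y) κ L →
                    ∀ K₂ : ℝ,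
                      Hn P n (fun ω => f (X ω) + g (Y ω)) - (Hn P n X + Hn P n Y) / 2 ≤
                        Real.logb 2 K₂ →
                      condEntOf P' (fun ω => Dn n (f (X'' ω) + g (Y'' ω)))
                          (fun ω => (Dn n (X' ω), Dn n (Y' ω))) -
                          (Hn P n X + Hn P n Y) / 2 ≤
                        4 * Real.logb 2 K₁ + 3 * Real.logb 2 K₂ + A * Real.logb 2 κ := by
  have hL : (1 : ℝ) ≤ 16 * (L + 1) := by linarith [(L.cast_nonneg : (0 : ℝ) ≤ L)]
  have hlogL : 0 ≤ logb 2 (16 * (L + 1)) := logb_nonneg one_lt_two hL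
  refine ⟨4 * (logb 2 (16 * (L + 1)) + 2), by linarith, ?_⟩
  intro n Ω mΩ P hP X Y hX hY c hc K₁ hK₁
  have ha : FiniteValued fun ω => Dn n (X ω) := finiteValued_Dn hX fun ω => (hc ω).1
  have hb : FiniteValued fun ω => Dn n (Y ω) := finiteValued_Dn hY fun ω => (hc ω).2
  obtain ⟨Q, hQ, hpath⟩ := exists_isBSGCoupling (P := P) ha hb
  have hθ₁ := hpath.measurePreserving₁
  have hθ₂ := hpath.measurePreserving₂.measurable
  have hθ₃ := hpath.measurePreserving₃.measurable
  have hX_given : Hn P n X - logb 2 K₁ ≤ Hn2 P n X Y - Hn P n Y := by linarith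
  have hY_given : Hn P n Y - logb 2 K₁ ≤ Hn2 P n X Y - Hn P n X := by linarith
  refine ⟨(Ω × Ω) × Ω, inferInstance, Q, hQ, fun ω => X ω.1.2, fun ω => Y ω.1.1,
    fun ω => X ω.1.1, fun ω => Y ω.2, hX.comp hθ₂, hY.comp hθ₁.measurable,
    hX.comp hθ₁.measurable, hY.comp hθ₃, ((hX.prodMk hY).measurePreserving P |>.comp hθ₁).map_eq,
    (hpath.condIID₁₂ hb).comp hX hθ₁.measurable hθ₂,
    (hpath.condIID₁₃ ha).comp hY hθ₁.measurable hθ₃,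
    hpath.condIndep₁₂₃.comp (φ := fun ω => (X ω.2, Y ω.1)) (by fun_prop) hY,
    (hpath.condIndep₂₃ ha hb).comp hX hY,
    hX_given.trans_eq (hpath.condEntOf₂ ha hb).symm,
    hY_given.trans_eq (hpath.condEntOf₃ ha hb).symm, ?_⟩
  intro κ hκ f g hfm hgm hf hg K₂ hK₂
  have hsub : Hn2 P n X Y ≤ Hn P n X + Hn P n Y := entOf_prodMk_le ha hb
  have hsum := hpath.condEntOf_Dn_add_le hX hY (fun ω => (hc ω).1) (fun ω => (hc ω).2) hκ hfm hgm
    hf hg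
  linarith [logb_mul_sq_le hL hκ]
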